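/- arXiv:1510.02421 — 3 statements merged into one kernel-verified Lean document; each statement's English description precedes it below -/
import Mathlib

section
/- If t ≥ 2 is even and n ≥ 3, then (n−2)t ≤ M(P_t × K_n); that is, there exists a real symmetric matrix A ∈ S(P_t × K_n) with nullity at least (n−2)t (equivalently, rank at most 2t). -/
namespace PaperPD

open SimpleGraph

variable {V α β : Type*}

/-- Vertices that eventually become blue in the standard zero forcing process
starting from the blue set `B`. -/
inductive ZFClosure (G : SimpleGraph V) (B : Set V) : V → Prop
  | init (v : V) (hv : v ∈ B) : ZFClosure G B v
  | force (u w : V) (hu : ZFClosure G B u) (huw : G.Adj u w)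
      (h : ∀ x, G.Adj u x → x ≠ w → ZFClosure G B x) : ZFClosure G B w

/-- `B` is a zero forcing set of `G`. -/
def IsZeroForcingSet (G : SimpleGraph V) (B : Set V) : Prop :=
  ∀ v, ZFClosure G B v

/-- The zero forcing number `Z(G)`. -/
noncomputable def zeroForcingNumber (G : SimpleGraph V) [Fintype V] : ℕ :=
  sInf {k | ∃ B : Finset V, B.card = k ∧ IsZeroForcingSet G ↑B}

/-- Vertices that eventually become blue in the skew zero forcing process
starting from the blue set `B` (the forcing vertex need not be blue). -/
inductive SkewZFClosure (G : SimpleGraph V) (B : Set V) : V → Prop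
  | init (v : V) (hv : v ∈ B) : SkewZFClosure G B v
  | force (u w : V) (huw : G.Adj u w)
      (h : ∀ x, G.Adj u x → x ≠ w → SkewZFClosure G B x) : SkewZFClosure G B w

/-- `B` is a skew zero forcing set of `G`. -/
def IsSkewZeroForcingSet (G : SimpleGraph V) (B : Set V) : Prop :=
  ∀ v, SkewZFClosure G B v

/-- The skew zero forcing number `Z⁻(G)`. -/
noncomputable def skewZeroForcingNumber (G : SimpleGraph V) [Fintype V] : ℕ :=
  sInf {k | ∃ B : Finset V, B.card = k ∧ IsSkewZeroForcingSet G ↑B}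

/-- The closed neighborhood `N[S]` of a set of vertices. -/
def closedNbhd (G : SimpleGraph V) (S : Set V) : Set V :=
  S ∪ {v | ∃ u ∈ S, G.Adj u v}

/-- `S` is a power dominating set of `G`, i.e. `N[S]` is a zero forcing set. -/
def IsPowerDominatingSet (G : SimpleGraph V) (S : Set V) : Prop :=
  IsZeroForcingSet G (closedNbhd G S)

/-- The power domination number `γ_P(G)`. -/
noncomputable def powerDominationNumber (G : SimpleGraph V) [Fintype V] : ℕ :=
  sInf {k | ∃ S : Finset V, S.card = k ∧ IsPowerDominatingSet G ↑S}

/-- `S` is a dominating set of `G` (`N[S] = V`). -/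
def IsDominatingSet (G : SimpleGraph V) (S : Set V) : Prop :=
  ∀ v, v ∈ closedNbhd G S

/-- The domination number `γ(G)`. -/
noncomputable def dominationNumber (G : SimpleGraph V) [Fintype V] : ℕ :=
  sInf {k | ∃ S : Finset V, S.card = k ∧ IsDominatingSet G ↑S}

/-- `S` is a total dominating set of `G` (`N(S) = V`). -/
def IsTotalDominatingSet (G : SimpleGraph V) (S : Set V) : Prop :=
  ∀ v, ∃ u ∈ S, G.Adj u v

/-- The total domination number `γ_t(G)`. -/
noncomputable def totalDominationNumber (G : SimpleGraph V) [Fintype V] : ℕ :=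
  sInf {k | ∃ S : Finset V, S.card = k ∧ IsTotalDominatingSet G ↑S}

/-- The degree of a vertex. -/
noncomputable def deg (G : SimpleGraph V) (v : V) : ℕ :=
  (G.neighborSet v).ncard

/-- The maximum degree `Δ(G)`. -/
noncomputable def maxDeg (G : SimpleGraph V) [Fintype V] : ℕ :=
  Finset.univ.sup fun v => deg G v

/-- `A` is a symmetric real matrix whose off-diagonal nonzero pattern is
described by the graph `G`, i.e. `A ∈ S(G)`. -/
def MatrixOfGraph (G : SimpleGraph V) (A : Matrix V V ℝ) : Prop :=
  A.IsSymm ∧ ∀ i j, i ≠ j → (A i j ≠ 0 ↔ G.Adj i j)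

/-- The nullity of a square real matrix. -/
noncomputable def nullity [Fintype V] [DecidableEq V] (A : Matrix V V ℝ) : ℕ :=
  Fintype.card V - A.rank

/-- The maximum nullity `M(G)`. -/
noncomputable def maxNullity (G : SimpleGraph V) [Fintype V] [DecidableEq V] : ℕ :=
  sSup {k | ∃ A : Matrix V V ℝ, MatrixOfGraph G A ∧ nullity A = k}

/-- The tensor (direct) product of two simple graphs. -/
def tensorProd (G : SimpleGraph α) (H : SimpleGraph β) : SimpleGraph (α × β) where
  Adj p q := G.Adj p.1 q.1 ∧ H.Adj p.2 q.2
  symm := ⟨fun _ _ h => ⟨h.1.symm, h.2.symm⟩⟩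
  loopless := ⟨fun p h => G.loopless.irrefl p.1 h.1⟩

/-- The lexicographic product of two simple graphs. -/
def lexProd (G : SimpleGraph α) (H : SimpleGraph β) : SimpleGraph (α × β) where
  Adj p q := G.Adj p.1 q.1 ∨ (p.1 = q.1 ∧ H.Adj p.2 q.2)
  symm := ⟨fun _ _ h => h.elim (fun h' => Or.inl h'.symm) (fun h' => Or.inr ⟨h'.1.symm, h'.2.symm⟩)⟩
  loopless := ⟨fun p h => h.elim (fun h' => G.loopless.irrefl p.1 h') (fun h' => H.loopless.irrefl p.2 h'.2)⟩


/-- skew adjacency weight of the path -/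
noncomputable def skw {t : ℕ} (i j : Fin t) : ℝ :=
  if i.val + 1 = j.val then 1 else if j.val + 1 = i.val then -1 else 0

theorem skw_neg {t : ℕ} (i j : Fin t) : skw j i = - skw i j := by
  unfold skw; split_ifs <;> first | omega | norm_num

theorem skw_ne {t : ℕ} (i j : Fin t) : skw i j ≠ 0 ↔ (pathGraph t).Adj i j := by
  rw [pathGraph_adj]; unfold skw; split_ifs <;> simp_all

/-- the matrix -/
noncomputable def bigA (t n : ℕ) : Matrix (Fin t × Fin n) (Fin t × Fin n) ℝ :=
  Matrix.of fun p q => skw p.1 q.1 * ((p.2.val : ℝ) - (q.2.val : ℝ))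

theorem bigA_mem (t n : ℕ) :
    MatrixOfGraph (tensorProd (pathGraph t) (⊤ : SimpleGraph (Fin n))) (bigA t n) := by
  constructor
  · ext p q
    simp only [Matrix.transpose_apply, bigA, Matrix.of_apply]
    rw [skw_neg p.1 q.1]; ring
  · intro p q _
    simp only [bigA, Matrix.of_apply, tensorProd, top_adj]
    rw [mul_ne_zero_iff, skw_ne, sub_ne_zero, Nat.cast_injective.ne_iff, Fin.val_injective.ne_iff]

theorem bigA_rank (t n : ℕ) : (bigA t n).rank ≤ t * 2 := by
  let U : Matrix (Fin t × Fin n) (Fin t × Fin 2) ℝ :=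
    Matrix.of fun p q => skw p.1 q.1 * (if q.2 = 0 then (p.2.val : ℝ) else 1)
  let W : Matrix (Fin t × Fin 2) (Fin t × Fin n) ℝ :=
    Matrix.of fun p q => if p.1 = q.1 then (if p.2 = 0 then 1 else -(q.2.val : ℝ)) else 0
  have h : bigA t n = U * W := by
    ext p q
    simp [bigA, U, W, Matrix.mul_apply, Fintype.sum_prod_type, Fin.sum_univ_two,
      Finset.sum_add_distrib]
    ring
  rw [h]
  refine (Matrix.rank_mul_le_left U W).trans ((Matrix.rank_le_card_width U).trans ?_)
  simp

theorem bigA_nullity (t n : ℕ) : (n - 2) * t ≤ nullity (bigA t n) := by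
  have h := bigA_rank t n
  unfold nullity
  rw [Fintype.card_prod, Fintype.card_fin, Fintype.card_fin, Nat.sub_mul, Nat.mul_comm n t]
  omega

/-- If `t ≥ 2` is even and `n ≥ 3`, then `(n−2)t ≤ M(P_t × K_n)`;
that is, there is a symmetric matrix `A ∈ S(P_t × K_n)` with nullity at least `(n−2)t`. -/
theorem stmt3 (t n : ℕ) (ht : 2 ≤ t) (hte : Even t) (hn : 3 ≤ n) :
    (n - 2) * t ≤ maxNullity (tensorProd (pathGraph t) (⊤ : SimpleGraph (Fin n))) ∧
    ∃ A : Matrix (Fin t × Fin n) (Fin t × Fin n) ℝ,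
      MatrixOfGraph (tensorProd (pathGraph t) (⊤ : SimpleGraph (Fin n))) A ∧
      (n - 2) * t ≤ nullity A := by
  refine ⟨?_, bigA t n, bigA_mem t n, bigA_nullity t n⟩
  refine (bigA_nullity t n).trans (le_csSup ?_ ⟨bigA t n, bigA_mem t n, rfl⟩)
  refine ⟨Fintype.card (Fin t × Fin n), ?_⟩
  rintro k ⟨A, _, rfl⟩
  exact Nat.sub_le _ _

end PaperPD
end

section
/- Let G be a finite simple graph that has at least one edge, and let A ∈ S(G) be any real symmetric matrix whose off-diagonal nonzero pattern is given by G. Then ⌈null(A)/Δ(G)⌉ ≤ γ_P(G), where null(A) is the nullity of A, Δ(G) the maximum degree, and γ_P(G) the power domination number of G. -/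
namespace PaperPD

open SimpleGraph

variable {V α β : Type*}

theorem zf_vanish {V : Type*} [Fintype V] [DecidableEq V] (G : SimpleGraph V)
    (A : Matrix V V ℝ) (hA : MatrixOfGraph G A) (B : Set V) (x : V → ℝ)
    (hx : A.mulVec x = 0) (hB : ∀ v ∈ B, x v = 0) (v : V) (hv : ZFClosure G B v) : x v = 0 := by
  induction hv with
  | init v hv => exact hB v hv
  | force u w hu huw h ihu ih =>
    have h1 : ∑ j, A u j * x j = 0 := congrFun hx u
    rw [Finset.sum_eq_single w] at h1
    · rcases mul_eq_zero.1 h1 with h2 | h2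
      · exact absurd h2 ((hA.2 u w huw.ne).2 huw)
      · exact h2
    · intro j _ hj
      by_cases hju : u = j
      · subst hju; rw [ihu, mul_zero]
      · by_cases ha : A u j = 0
        · rw [ha, zero_mul]
        · rw [ih j ((hA.2 u j hju).1 ha) hj, mul_zero]
    · simp

theorem zf_trans {V : Type*} (G : SimpleGraph V) (B C : Set V)
    (h : ∀ v ∈ C, ZFClosure G B v) (v : V) (hv : ZFClosure G C v) : ZFClosure G B v := by
  induction hv with
  | init v hv => exact h v hv
  | force u w hu huw h ihu ih => exact ZFClosure.force u w ihu huw ih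

theorem nullity_le {V : Type*} [Fintype V] [DecidableEq V] (G : SimpleGraph V)
    (A : Matrix V V ℝ) (hA : MatrixOfGraph G A) (B : Finset V)
    (hB : IsZeroForcingSet G (B : Set V)) : nullity A ≤ B.card := by
  have h1 := A.mulVecLin.finrank_range_add_finrank_ker
  rw [Module.finrank_fintype_fun_eq_card] at h1
  let f : LinearMap.ker A.mulVecLin →ₗ[ℝ] (B → ℝ) :=
    (LinearMap.funLeft ℝ ℝ (Subtype.val : B → V)).comp (LinearMap.ker A.mulVecLin).subtype
  have hf : Function.Injective f := by
    rw [← LinearMap.ker_eq_bot, LinearMap.ker_eq_bot']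
    rintro ⟨x, hx⟩ hfx
    ext v
    refine zf_vanish G A hA B x (by simpa using hx) ?_ v (hB v)
    intro b hb
    exact congrFun hfx ⟨b, hb⟩
  have h2 := LinearMap.finrank_le_finrank_of_injective hf
  rw [Module.finrank_fintype_fun_eq_card, Fintype.card_coe] at h2
  unfold nullity Matrix.rank
  omega

theorem local_set {V : Type*} [Fintype V] [DecidableEq V] (G : SimpleGraph V)
    (hD : 1 ≤ maxDeg G) (v : V) : ∃ B : Finset V, B.card ≤ maxDeg G ∧ v ∈ B ∧
      ∀ u, G.Adj v u → ZFClosure G (B : Set V) u := by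
  classical
  have hd : (G.neighborFinset v).card ≤ maxDeg G := by
    have : deg G v ≤ maxDeg G := Finset.le_sup (f := fun v => deg G v) (Finset.mem_univ v)
    rw [deg, Set.ncard_eq_toFinset_card'] at this
    exact this
  by_cases hw : ∃ w, G.Adj v w
  · obtain ⟨w, hw⟩ := hw
    have hwm : w ∈ G.neighborFinset v := by simpa using hw
    have key : ∀ x, G.Adj v x → x ≠ w →
        ZFClosure G ((insert v ((G.neighborFinset v).erase w) : Finset V) : Set V) x := by
      intro x hx hxw
      apply ZFClosure.init
      simp [hx, hxw]
    refine ⟨insert v ((G.neighborFinset v).erase w), ?_, by simp, ?_⟩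
    · have := Finset.card_insert_le v ((G.neighborFinset v).erase w)
      have h3 := Finset.card_erase_add_one hwm
      omega
    · intro u hu
      by_cases huw : u = w
      · subst huw
        exact ZFClosure.force v u (ZFClosure.init v (by simp)) hu key
      · exact key u hu huw
  · exact ⟨{v}, by simpa using hD, by simp, fun u hu => absurd ⟨u, hu⟩ hw⟩

/-- If `G` has at least one edge and `A ∈ S(G)`, then
`⌈null(A)/Δ(G)⌉ ≤ γ_P(G)`. -/
theorem stmt10 {V : Type*} [Fintype V] [DecidableEq V] (G : SimpleGraph V)
    (hE : ∃ u v, G.Adj u v) (A : Matrix V V ℝ) (hA : MatrixOfGraph G A) :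
    ⌈(nullity A : ℚ) / (maxDeg G : ℚ)⌉ ≤ (powerDominationNumber G : ℤ) := by
  have hD : 1 ≤ maxDeg G := by
    obtain ⟨u, v, h⟩ := hE
    have h1 : deg G u ≤ maxDeg G := Finset.le_sup (f := fun v => deg G v) (Finset.mem_univ u)
    have h2 : 0 < deg G u := (Set.ncard_pos (Set.toFinite _)).2 ⟨v, h⟩
    omega
  have hne : {k | ∃ S : Finset V, S.card = k ∧ IsPowerDominatingSet G ↑S}.Nonempty :=
    ⟨_, Finset.univ, rfl, fun v => ZFClosure.init v (Or.inl (by simp))⟩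
  obtain ⟨S, hS, hP⟩ := Nat.sInf_mem hne
  change S.card = powerDominationNumber G at hS
  choose B hB1 hB2 hB3 using local_set G hD
  have hZ : IsZeroForcingSet G ((S.biUnion B : Finset V) : Set V) := by
    intro v
    refine zf_trans G _ _ ?_ v (hP v)
    have hsub : ∀ u ∈ S, ∀ b ∈ (B u : Set V), b ∈ ((S.biUnion B : Finset V) : Set V) := by
      intro u hu b hb
      exact Finset.mem_coe.2 (Finset.mem_biUnion.2 ⟨u, hu, hb⟩)
    rintro x (hx | ⟨u, hu, hux⟩)
    · exact ZFClosure.init x (hsub x hx x (hB2 x))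
    · exact zf_trans G _ _ (fun b hb => ZFClosure.init b (hsub u hu b hb)) x (hB3 u x hux)
  have h1 := nullity_le G A hA _ hZ
  have h2 : (S.biUnion B).card ≤ S.card * maxDeg G :=
    Finset.card_biUnion_le_card_mul S B _ (fun v _ => hB1 v)
  rw [hS] at h2
  have h3 : (nullity A : ℚ) ≤ powerDominationNumber G * maxDeg G := by
    exact_mod_cast h1.trans h2
  rw [Int.ceil_le, div_le_iff₀ (by exact_mod_cast hD)]
  exact_mod_cast h3

end PaperPD
end

section
/- Let t ≥ 3 and n ≥ 3. Suppose either t is odd and n ≥ t, or t is even and n ≥ t/2. Then γ_P(C_t × K_n) = ⌈t/2⌉ if t ≢ 2 (mod 4), while if t ≡ 2 (mod 4) then γ_P(C_t × K_n) equals t/2 or t/2 + 1. -/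
namespace PaperPD

open SimpleGraph

variable {V α β : Type*}

theorem cyc_adj (t : ℕ) (ht : 3 ≤ t) (u v : Fin t) : (cycleGraph t).Adj u v ↔
    (u.val + 1 = v.val ∨ v.val + 1 = u.val ∨ (u.val = 0 ∧ v.val + 1 = t) ∨
      (v.val = 0 ∧ u.val + 1 = t)) := by
  rw [cycleGraph_adj']
  have hu := u.2
  have hv := v.2
  rw [Fin.sub_def, Fin.sub_def]
  simp only
  rcases lt_trichotomy u.val v.val with h | h | h
  · rw [Nat.mod_eq_of_lt (a := t - v.val + u.val) (by omega),
      show t - u.val + v.val = (v.val - u.val) + t by omega, Nat.add_mod_right,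
      Nat.mod_eq_of_lt (by omega)]
    omega
  · rw [h, show t - v.val + v.val = t by omega, Nat.mod_self]
    omega
  · rw [Nat.mod_eq_of_lt (a := t - u.val + v.val) (by omega),
      show t - v.val + u.val = (u.val - v.val) + t by omega, Nat.add_mod_right,
      Nat.mod_eq_of_lt (by omega)]
    omega

theorem fort_not (G : SimpleGraph V) (S : Set V) (W : V → Prop)
    (h0 : ∃ w, W w) (h1 : ∀ w, W w → w ∉ closedNbhd G S)
    (h2 : ∀ u w, ¬ W u → W w → G.Adj u w → ∃ x, W x ∧ x ≠ w ∧ G.Adj u x) :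
    ¬ IsPowerDominatingSet G S := by
  intro h
  obtain ⟨w, hw⟩ := h0
  have key : ∀ v, ZFClosure G (closedNbhd G S) v → ¬ W v := by
    intro v hv
    induction hv with
    | init v hv => exact fun hW => h1 v hW hv
    | force u w hu huw h ihu ih =>
      intro hW
      obtain ⟨x, hx, hne, hadj⟩ := h2 u w ihu hW huw
      exact ih x hadj hne hx
  exact key w (h w) hw

/-- uncovered layers are nearly full -/
theorem uncovered_full (t n : ℕ) (S : Finset (Fin t × Fin n))
    (hS : IsPowerDominatingSet (tensorProd (cycleGraph t) (⊤ : SimpleGraph (Fin n))) ↑S)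
    (j : Fin t) (hj : ∀ s ∈ S, ¬ (cycleGraph t).Adj s.1 j) :
    n ≤ (S.filter (fun s => s.1 = j)).card + 2 := by
  by_contra hc
  push Not at hc
  set A : Finset (Fin n) := Finset.univ.filter (fun a => (j, a) ∉ S) with hA
  have hAc : (Finset.univ.filter (fun a : Fin n => (j, a) ∈ S)).card ≤
      (S.filter (fun s => s.1 = j)).card := by
    apply Finset.card_le_card_of_injOn (fun a => (j, a))
    · intro a ha
      simpa using ha
    · intro a _ b _ hab
      simpa using hab
  have hsum := Finset.card_filter_add_card_filter_not (s := (Finset.univ : Finset (Fin n)))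
    (fun a : Fin n => (j, a) ∈ S)
  rw [Finset.card_univ, Fintype.card_fin] at hsum
  have hA3 : 2 < A.card := by rw [hA]; omega
  refine fort_not _ _ (fun w => w.1 = j ∧ w ∉ S) ?_ ?_ ?_ hS
  · obtain ⟨a, ha⟩ := Finset.card_pos.1 (show 0 < A.card by omega)
    exact ⟨(j, a), rfl, by simpa [hA] using ha⟩
  · rintro w ⟨rfl, hw⟩ (h | ⟨u, hu, hadj⟩)
    · exact hw h
    · exact hj u hu hadj.1
  · rintro u w - ⟨rfl, hw⟩ hadj
    have : 0 < ((A.erase u.2).erase w.2).card := by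
      have h1 := Finset.pred_card_le_card_erase (s := A) (a := u.2)
      have h2 := Finset.pred_card_le_card_erase (s := A.erase u.2) (a := w.2)
      omega
    obtain ⟨a, ha⟩ := Finset.card_pos.1 this
    simp only [Finset.mem_erase, hA, Finset.mem_filter, Finset.mem_univ, true_and] at ha
    refine ⟨(w.1, a), ⟨rfl, ha.2.2⟩, ?_, hadj.1, ?_⟩
    · intro h
      exact ha.1 (congrArg Prod.snd h)
    · exact fun h => ha.2.1 h.symm

theorem exists_uncovered (t n : ℕ) (ht : 3 ≤ t) (S : Finset (Fin t × Fin n))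
    (hc : 2 * S.card < t) : ∃ j : Fin t, ∀ s ∈ S, ¬ (cycleGraph t).Adj s.1 j := by
  by_contra hcon
  push Not at hcon
  have : (Finset.univ : Finset (Fin t)) ⊆ S.biUnion (fun s => (cycleGraph t).neighborFinset s.1) := by
    intro j _
    obtain ⟨s, hs, h⟩ := hcon j
    simp only [Finset.mem_biUnion, mem_neighborFinset]
    exact ⟨s, hs, h⟩
  have h1 := Finset.card_le_card this
  have h2 := Finset.card_biUnion_le_card_mul S
    (fun s => (cycleGraph t).neighborFinset s.1) 2 (by
      intro s _
      obtain ⟨k, rfl⟩ : ∃ k, t = k + 3 := ⟨t - 3, by omega⟩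
      rw [card_neighborFinset_eq_degree, cycleGraph_degree_three_le])
  rw [Finset.card_univ, Fintype.card_fin] at h1
  omega

def fortA (j : Fin 6) (a b : Fin 3) (w : Fin 6 × Fin 3) : Bool :=
  if a = b then
    if w.1 = j then w.2 ≠ a else (w.1 = j + 2 ∨ w.1 = j + 4) ∧ w.2 = a
  else if w.1 = j ∨ w.1 = j + 2 ∨ w.1 = j + 4 then w.2 = b else w.2 = a

instance tdec {α β : Type*} (G : SimpleGraph α) (H : SimpleGraph β) [DecidableRel G.Adj]
    [DecidableRel H.Adj] : DecidableRel (tensorProd G H).Adj := fun p q =>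
  inferInstanceAs (Decidable (G.Adj p.1 q.1 ∧ H.Adj p.2 q.2))

set_option maxRecDepth 100000 in
theorem case6 (j : Fin 6) (a b : Fin 3) :
    ¬ IsPowerDominatingSet (tensorProd (cycleGraph 6) (⊤ : SimpleGraph (Fin 3)))
      {(j, a), (j + 3, b)} := by
  refine fort_not _ _ (fun w => fortA j a b w = true) ?_ ?_ ?_
  · revert j a b; decide +kernel
  · have : ∀ (j : Fin 6) (a b : Fin 3) (w : Fin 6 × Fin 3), fortA j a b w = true →
        w ≠ (j, a) ∧ w ≠ (j + 3, b) ∧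
        ¬ (tensorProd (cycleGraph 6) (⊤ : SimpleGraph (Fin 3))).Adj (j, a) w ∧
        ¬ (tensorProd (cycleGraph 6) (⊤ : SimpleGraph (Fin 3))).Adj (j + 3, b) w := by
      decide +kernel
    intro w hw
    obtain ⟨h1, h2, h3, h4⟩ := this j a b w hw
    rintro (h | ⟨u, hu, hadj⟩)
    · rcases h with h | h
      · exact h1 h
      · exact h2 h
    · rcases hu with rfl | rfl
      · exact h3 hadj
      · exact h4 hadj
  · have : ∀ (j : Fin 6) (a b : Fin 3) (u w : Fin 6 × Fin 3), fortA j a b w = true →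
        fortA j a b u = true ∨ ¬ (tensorProd (cycleGraph 6) (⊤ : SimpleGraph (Fin 3))).Adj u w ∨
        ∃ x, fortA j a b x = true ∧ x ≠ w ∧
          (tensorProd (cycleGraph 6) (⊤ : SimpleGraph (Fin 3))).Adj u x := by
      decide +kernel
    intro u w hu hw hadj
    rcases this j a b u w hw with h | h | h
    · exact absurd h hu
    · exact absurd hadj h
    · exact h

theorem case3 (x : Fin 3 × Fin 3) :
    ¬ IsPowerDominatingSet (tensorProd (cycleGraph 3) (⊤ : SimpleGraph (Fin 3))) {x} := by
  refine fort_not _ _ (fun w => w ≠ x ∧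
    ¬ (tensorProd (cycleGraph 3) (⊤ : SimpleGraph (Fin 3))).Adj x w) ?_ ?_ ?_
  · revert x; decide +kernel
  · rintro w ⟨h1, h2⟩ (h | ⟨u, rfl, hadj⟩)
    · exact h1 h
    · exact h2 hadj
  · have : ∀ (x u w : Fin 3 × Fin 3), w = x ∨ u = x ∨ 
        (tensorProd (cycleGraph 3) (⊤ : SimpleGraph (Fin 3))).Adj x w ∨
        ¬ (tensorProd (cycleGraph 3) (⊤ : SimpleGraph (Fin 3))).Adj u w ∨
        ∃ y, y ≠ x ∧ ¬ (tensorProd (cycleGraph 3) (⊤ : SimpleGraph (Fin 3))).Adj x y ∧ y ≠ w ∧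
          (tensorProd (cycleGraph 3) (⊤ : SimpleGraph (Fin 3))).Adj u y := by
      decide +kernel
    intro u w hu hw hadj
    rcases this x u w with h | h | h | h | ⟨y, h1, h2, h3, h4⟩
    · exact absurd h hw.1
    · subst h
      exact absurd hadj hw.2
    · exact absurd h hw.2
    · exact absurd hadj h
    · exact ⟨y, ⟨h1, h2⟩, h3, h4⟩

def rot (t : ℕ) (j : Fin t) (k : ℕ) (hk : k < t) : Fin t :=
  ⟨if j.val + k < t then j.val + k else j.val + k - t, by have := j.2; split <;> omega⟩

theorem layers_le {t n : ℕ} (S : Finset (Fin t × Fin n)) (J : Finset (Fin t)) :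
    ∑ j ∈ J, (S.filter (fun s => s.1 = j)).card ≤ S.card := by
  rw [← Finset.card_biUnion]
  · apply Finset.card_le_card
    intro x
    simp
  · intro a _ b _ hab
    rw [Function.onFun, Finset.disjoint_left]
    intro x hx hy
    simp only [Finset.mem_filter] at hx hy
    exact hab (hx.2.symm.trans hy.2)

theorem rot_spec (t : ℕ) (j : Fin t) (k : ℕ) (hk : k < t) : (rot t j k hk).val < t ∧
    ((rot t j k hk).val = j.val + k ∨ (rot t j k hk).val + t = j.val + k) := by
  refine ⟨(rot t j k hk).2, ?_⟩
  simp only [rot]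
  split_ifs <;> omega

theorem rot6 (x : Fin 6) : rot 6 x 3 (by omega) = x + 3 := by revert x; decide

theorem ne6 (x : Fin 6) : x ≠ x + 3 := by revert x; decide

theorem lower (t n : ℕ) (ht : 3 ≤ t) (hn : 3 ≤ n)
    (h : (Odd t ∧ t ≤ n) ∨ (Even t ∧ t / 2 ≤ n)) (S : Finset (Fin t × Fin n))
    (hS : IsPowerDominatingSet (tensorProd (cycleGraph t) (⊤ : SimpleGraph (Fin n))) ↑S) :
    t ≤ 2 * S.card := by
  by_contra hc
  push Not at hc
  obtain ⟨j, hj⟩ := exists_uncovered t n ht S hc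
  have hf := uncovered_full t n S hS j hj
  have hle1 := layers_le S {j}
  rw [Finset.sum_singleton] at hle1
  rcases h with ⟨hodd, htn⟩ | ⟨hev, htn⟩
  · obtain rfl : t = 3 := by omega
    obtain rfl : n = 3 := by omega
    obtain ⟨x, rfl⟩ := Finset.card_eq_one.1 (show S.card = 1 by omega)
    refine case3 x ?_
    simpa using hS
  · obtain ⟨m, hm⟩ := hev
    -- dichotomy at distance two
    have step : ∀ (p q r : Fin t), (cycleGraph t).Adj p j →
        (∀ i, (cycleGraph t).Adj i q → i = p ∨ i = r) →
        (n ≤ (S.filter (fun s => s.1 = q)).card + 2) ∨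
          1 ≤ (S.filter (fun s => s.1 = r)).card := by
      intro p q r hp hq
      by_cases hu : ∀ s ∈ S, ¬ (cycleGraph t).Adj s.1 q
      · exact Or.inl (uncovered_full _ n S hS q hu)
      · push Not at hu
        obtain ⟨s, hs, hadj⟩ := hu
        right
        rcases hq s.1 hadj with h | h
        · exact absurd (h ▸ hp) (hj s hs)
        · exact Finset.card_pos.2 ⟨s, by simp [hs, h]⟩
    have hjl := j.2
    have s1 := step (rot _ j 1 (by omega)) (rot _ j 2 (by omega)) (rot _ j 3 (by omega))
      (by rw [cyc_adj _ ht]; simp only [rot]; split_ifs <;> omega)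
      (by
        intro i hi
        have := i.2
        rw [cyc_adj _ ht] at hi
        simp only [Fin.ext_iff]
        have h0 := rot_spec t j 1 (by omega)
        have h1 := rot_spec t j 2 (by omega)
        have h2 := rot_spec t j 3 (by omega)
        omega)
    have s2 := step (rot _ j (t - 1) (by omega)) (rot _ j (t - 2) (by omega))
      (rot _ j (t - 3) (by omega))
      (by rw [cyc_adj _ ht]; simp only [rot]; split_ifs <;> omega)
      (by
        intro i hi
        have := i.2
        rw [cyc_adj _ ht] at hi
        simp only [Fin.ext_iff]
        have h0 := rot_spec t j (t - 1) (by omega)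
        have h1 := rot_spec t j (t - 2) (by omega)
        have h2 := rot_spec t j (t - 3) (by omega)
        omega)
    have pair : ∀ k (hk : k < t), 0 < k → (S.filter (fun s => s.1 = j)).card +
        (S.filter (fun s => s.1 = rot _ j k hk)).card ≤ S.card := by
      intro k hk hk0
      have := layers_le S {j, rot _ j k hk}
      rwa [Finset.sum_pair] at this
      simp only [rot, ne_eq, Fin.ext_iff]
      split_ifs <;> omega
    have p2 := pair 2 (by omega) (by omega)
    have p3 := pair 3 (by omega) (by omega)
    have p2' := pair (t - 2) (by omega) (by omega)
    have p3' := pair (t - 3) (by omega) (by omega)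
    rcases Nat.lt_or_ge m 4 with hm4 | hm4
    · by_cases hm2 : m = 2
      · omega
      · obtain rfl : t = 6 := by omega
        have htri : ∀ x y : Fin 6, x ≠ j → y ≠ j → x ≠ y →
            (S.filter (fun s => s.1 = j)).card + ((S.filter (fun s => s.1 = x)).card +
            (S.filter (fun s => s.1 = y)).card) ≤ S.card := by
          intro x y hx hy hxy
          have := layers_le S {j, x, y}
          rwa [Finset.sum_insert (by simp [hx.symm, hy.symm]), Finset.sum_pair hxy] at this
        have h24 := htri (rot 6 j 2 (by omega)) (rot 6 j 4 (by omega))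
          (by simp only [rot, ne_eq, Fin.ext_iff]; split_ifs <;> omega)
          (by simp only [rot, ne_eq, Fin.ext_iff]; split_ifs <;> omega)
          (by simp only [rot, ne_eq, Fin.ext_iff]; split_ifs <;> omega)
        have h23 := htri (rot 6 j 2 (by omega)) (rot 6 j 3 (by omega))
          (by simp only [rot, ne_eq, Fin.ext_iff]; split_ifs <;> omega)
          (by simp only [rot, ne_eq, Fin.ext_iff]; split_ifs <;> omega)
          (by simp only [rot, ne_eq, Fin.ext_iff]; split_ifs <;> omega)
        simp only [Nat.reduceSub] at s2 p2' p3'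
        obtain rfl : n = 3 := by omega
        have hj1 : 0 < (S.filter (fun s => s.1 = j)).card := by omega
        have hr1 : 0 < (S.filter (fun s => s.1 = rot 6 j 3 (by omega))).card := by omega
        obtain ⟨⟨x, a⟩, hx⟩ := Finset.card_pos.1 hj1
        obtain ⟨⟨y, b⟩, hy⟩ := Finset.card_pos.1 hr1
        simp only [Finset.mem_filter] at hx hy
        obtain ⟨hx, rfl⟩ := hx
        obtain ⟨hy, hy2⟩ := hy
        have hy3 : y = x + 3 := by
          rw [hy2]
          exact rot6 x
        subst hy3
        have hne : x ≠ x + 3 := by exact ne6 x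
        have hsub : ({(x, a), (x + 3, b)} : Finset (Fin 6 × Fin 3)) ⊆ S := by
          intro z hz
          simp only [Finset.mem_insert, Finset.mem_singleton] at hz
          rcases hz with rfl | rfl <;> assumption
        have heq := Finset.eq_of_subset_of_card_le hsub (by
          rw [Finset.card_pair (by simp [hne])]; omega)
        refine case6 x a b ?_
        rw [← heq] at hS
        simpa using hS
    · have := layers_le S {j, rot _ j 3 (by omega), rot _ j (t - 3) (by omega)}
      rw [Finset.sum_insert, Finset.sum_pair] at this
      · omega
      · simp only [rot, ne_eq, Fin.ext_iff]
        split_ifs <;> omega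
      · simp only [rot, Finset.mem_insert, Finset.mem_singleton, Fin.ext_iff]
        split_ifs <;> omega

def TP (t i : ℕ) : Prop := i % 4 = 1 ∨ i % 4 = 2 ∨ (i = 0 ∧ (t % 4 = 1 ∨ t % 4 = 2))

instance (t : ℕ) : DecidablePred (TP t) := fun i => by unfold TP; infer_instance

theorem count12 (t : ℕ) : ((Finset.range t).filter (fun i => i % 4 = 1 ∨ i % 4 = 2)).card =
    if t % 4 = 2 then t / 2 else if t % 4 = 1 then t / 2 else (t + 1) / 2 := by
  induction t with
  | zero => simp
  | succ k ih =>
    rw [Finset.range_add_one, Finset.filter_insert]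
    split_ifs at ih ⊢ <;> (try rw [Finset.card_insert_of_notMem (by simp), ih]) <;> omega

theorem countT (t : ℕ) (ht : 3 ≤ t) : ((Finset.univ : Finset (Fin t)).filter
    (fun i => TP t i.val)).card ≤ if t % 4 = 2 then t / 2 + 1 else (t + 1) / 2 := by
  have h1 : ((Finset.univ : Finset (Fin t)).filter (fun i => TP t i.val)).card ≤
      ((Finset.range t).filter (TP t)).card := by
    apply Finset.card_le_card_of_injOn (fun i => i.val)
    · intro a ha
      have := a.2
      simp at ha ⊢
      exact ha
    · intro a _ b _ h
      exact Fin.ext h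
  have hc := count12 t
  by_cases h12 : t % 4 = 1 ∨ t % 4 = 2
  · have h2 : (Finset.range t).filter (TP t) ⊆
        insert 0 ((Finset.range t).filter (fun i => i % 4 = 1 ∨ i % 4 = 2)) := by
      intro i
      simp only [TP, Finset.mem_filter, Finset.mem_insert]
      tauto
    have h3 := Finset.card_le_card h2
    have h4 := Finset.card_insert_le 0
      ((Finset.range t).filter (fun i => i % 4 = 1 ∨ i % 4 = 2))
    split_ifs at hc ⊢ <;> omega
  · have h2 : (Finset.range t).filter (TP t) ⊆
        ((Finset.range t).filter (fun i => i % 4 = 1 ∨ i % 4 = 2)) := by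
      intro i
      simp only [TP, Finset.mem_filter]
      tauto
    have h3 := Finset.card_le_card h2
    split_ifs at hc ⊢ <;> omega

theorem domT (t : ℕ) (ht : 3 ≤ t) (j : Fin t) : ∃ i : Fin t, TP t i.val ∧
    (cycleGraph t).Adj i j ∧
      (TP t j.val ∨ ∀ k, (cycleGraph t).Adj i k → TP t k.val ∨ k = j) := by
  have hj := j.2
  have main : ∃ i : ℕ, ∃ hi : i < t, TP t i ∧ (cycleGraph t).Adj ⟨i, hi⟩ j ∧
      (TP t j.val ∨ ∀ k : Fin t, (cycleGraph t).Adj ⟨i, hi⟩ k → TP t k.val ∨ k = j) := by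
    simp only [cyc_adj t ht, TP, Fin.ext_iff]
    have h4 : j.val % 4 = 0 ∨ j.val % 4 = 1 ∨ j.val % 4 = 2 ∨ j.val % 4 = 3 := by omega
    by_cases hs : (j.val % 4 = 0 ∨ j.val % 4 = 1)
    · by_cases hl : j.val + 1 < t
      · refine ⟨j.val + 1, hl, by omega, by omega, ?_⟩
        by_cases h1 : j.val % 4 = 1
        · omega
        · right
          intro k hk
          have := k.2
          omega
      · refine ⟨0, by omega, by omega, by omega, ?_⟩
        right
        intro k hk
        have := k.2
        omega
    · refine ⟨j.val - 1, by omega, by omega, by omega, ?_⟩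
      by_cases h1 : j.val % 4 = 2
      · omega
      · right
        intro k hk
        have := k.2
        omega
  obtain ⟨i, hi, h⟩ := main
  exact ⟨⟨i, hi⟩, h⟩

theorem upper (t n : ℕ) (ht : 3 ≤ t) (hn : 3 ≤ n) : ∃ S : Finset (Fin t × Fin n),
    S.card ≤ (if t % 4 = 2 then t / 2 + 1 else (t + 1) / 2) ∧
    IsPowerDominatingSet (tensorProd (cycleGraph t) (⊤ : SimpleGraph (Fin n))) ↑S := by
  let c : Fin n := ⟨0, by omega⟩
  let d : Fin n := ⟨1, by omega⟩
  have hcd : d ≠ c := by simp [c, d]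
  refine ⟨((Finset.univ : Finset (Fin t)).filter (fun i => TP t i.val)).image (fun i => (i, c)),
    Finset.card_image_le.trans (countT t ht), ?_⟩
  set S := ((Finset.univ : Finset (Fin t)).filter (fun i => TP t i.val)).image (fun i => (i, c))
  have hmem : ∀ i : Fin t, TP t i.val → (i, c) ∈ (S : Set (Fin t × Fin n)) := by
    intro i hi
    simp [S, hi]
  have hB1 : ∀ (j : Fin t) (a : Fin n), a ≠ c →
      (j, a) ∈ closedNbhd (tensorProd (cycleGraph t) (⊤ : SimpleGraph (Fin n))) ↑S := by
    intro j a ha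
    obtain ⟨i, hi, hij, -⟩ := domT t ht j
    exact Or.inr ⟨(i, c), hmem i hi, hij, ha.symm⟩
  have hB2 : ∀ (j : Fin t) (a : Fin n), TP t j.val →
      (j, a) ∈ closedNbhd (tensorProd (cycleGraph t) (⊤ : SimpleGraph (Fin n))) ↑S := by
    intro j a hj
    by_cases ha : a = c
    · subst ha
      exact Or.inl (hmem j hj)
    · exact hB1 j a ha
  rintro ⟨j, a⟩
  by_cases ha : a = c
  · subst ha
    obtain ⟨i, hi, hij, hk⟩ := domT t ht j
    rcases hk with hk | hk
    · exact .init _ (hB2 j c hk)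
    refine ZFClosure.force (i, d) (j, c) (.init _ (hB2 i d hi)) ⟨hij, hcd⟩ ?_
    rintro ⟨k, b⟩ hadj hne
    by_cases hb : b = c
    · subst hb
      rcases hk k hadj.1 with h | h
      · exact .init _ (hB2 k c h)
      · exact absurd (by rw [h]) hne
    · exact .init _ (hB1 k b hb)
  · exact .init _ (hB1 j a ha)

/-- Let `t ≥ 3`, `n ≥ 3`, and suppose `t` is odd with `n ≥ t`, or
`t` is even with `n ≥ t/2`. Then `γ_P(C_t × K_n) = ⌈t/2⌉` if `t ≢ 2 (mod 4)`, and
`γ_P(C_t × K_n) ∈ {t/2, t/2 + 1}` if `t ≡ 2 (mod 4)`. -/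
theorem stmt14 (t n : ℕ) (ht : 3 ≤ t) (hn : 3 ≤ n)
    (h : (Odd t ∧ t ≤ n) ∨ (Even t ∧ t / 2 ≤ n)) :
    (t % 4 ≠ 2 →
      powerDominationNumber (tensorProd (cycleGraph t) (⊤ : SimpleGraph (Fin n))) = (t + 1) / 2) ∧
    (t % 4 = 2 →
      powerDominationNumber (tensorProd (cycleGraph t) (⊤ : SimpleGraph (Fin n))) = t / 2 ∨
      powerDominationNumber (tensorProd (cycleGraph t) (⊤ : SimpleGraph (Fin n))) = t / 2 + 1) := by
  have hlow : (t + 1) / 2 ≤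
      powerDominationNumber (tensorProd (cycleGraph t) (⊤ : SimpleGraph (Fin n))) := by
    unfold powerDominationNumber
    apply le_csInf
    · obtain ⟨S, _, hS⟩ := upper t n ht hn
      exact ⟨_, S, rfl, hS⟩
    · rintro k ⟨S, rfl, hS⟩
      have := lower t n ht hn h S hS
      omega
  have hup : powerDominationNumber (tensorProd (cycleGraph t) (⊤ : SimpleGraph (Fin n))) ≤
      if t % 4 = 2 then t / 2 + 1 else (t + 1) / 2 := by
    obtain ⟨S, hc, hS⟩ := upper t n ht hn
    have hle : powerDominationNumber (tensorProd (cycleGraph t) (⊤ : SimpleGraph (Fin n))) ≤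
        S.card := Nat.sInf_le ⟨S, rfl, hS⟩
    exact hle.trans hc
  constructor
  · intro h4
    rw [if_neg h4] at hup
    omega
  · intro h4
    rw [if_pos h4] at hup
    omega

end PaperPD
end
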